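/- arXiv:2411.14538 — 3 statements merged into one kernel-verified Lean document; each statement's English description precedes it below -/
import Mathlib

section
/- Every language over a one-letter alphabet {a} recognized by a one-way reversible automaton with multiple initial states (MRFA) is the union of a language recognized by a one-way permutation automaton (1PerFA) and a finite language. -/
open scoped Classical

/-- Run a partial transition function along a word. -/
def runP {A Q : Type} (d : A → Q → Option Q) (q : Q) (w : List A) : Option Q :=
  w.foldl (fun o a => o.bind (d a)) (some q)

/-- One-way reversible finite automaton (1RFA): a partial deterministic automaton
with a single initial state and injective transition functions. -/
structure RFA (A Q : Type) where
  start : Q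
  next : A → Q → Option Q
  inj : ∀ a q q' r, next a q = some r → next a q' = some r → q = q'
  accept : Set Q

def RFA.Language {A Q : Type} (M : RFA A Q) : Set (List A) :=
  {w | ∃ qf ∈ M.accept, runP M.next M.start w = some qf}

/-- A permutation automaton (1PerFA): every transition function is a totally
defined bijection. -/
def RFA.IsPerm {A Q : Type} (M : RFA A Q) : Prop :=
  (∀ a q, (M.next a q).isSome) ∧ ∀ a r, ∃ q, M.next a q = some r

/-- One-way reversible finite automaton with multiple initial states (MRFA). -/
structure MRFA (A Q : Type) where
  init : Set Q
  next : A → Q → Option Q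
  inj : ∀ a q q' r, next a q = some r → next a q' = some r → q = q'
  accept : Set Q

def MRFA.Language {A Q : Type} (M : MRFA A Q) : Set (List A) :=
  {w | ∃ q0 ∈ M.init, ∃ qf ∈ M.accept, runP M.next q0 w = some qf}

def Rec1RFA (A : Type) (L : Set (List A)) : Prop :=
  ∃ (Q : Type) (_ : Fintype Q) (M : RFA A Q), M.Language = L

def Rec1RFA1 (A : Type) (L : Set (List A)) : Prop :=
  ∃ (Q : Type) (_ : Fintype Q) (M : RFA A Q), M.accept.ncard = 1 ∧ M.Language = L

def Rec1PerFA (A : Type) (L : Set (List A)) : Prop :=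
  ∃ (Q : Type) (_ : Fintype Q) (M : RFA A Q), M.IsPerm ∧ M.Language = L

def Rec1PerFA1 (A : Type) (L : Set (List A)) : Prop :=
  ∃ (Q : Type) (_ : Fintype Q) (M : RFA A Q),
    M.IsPerm ∧ M.accept.ncard = 1 ∧ M.Language = L

def RecMRFA (A : Type) (L : Set (List A)) : Prop :=
  ∃ (Q : Type) (_ : Fintype Q) (M : MRFA A Q), M.Language = L

/-- Sweeping reversible automaton (sRFA), given without its accepting set:
states `Qp` move rightwards, states `Qm` move leftwards; `startT` is the
transition of the left end-marker function on the initial state, `turnL` its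
restriction to `Qm`, and `turnR` is the transition function at the right
end-marker.  All transition functions are partial and injective, and the left
end-marker function is injective on the whole of `{q₀} ∪ Q₋`. -/
structure SRFA (A Qp Qm : Type) where
  start : Qp
  nextP : A → Qp → Option Qp
  nextM : A → Qm → Option Qm
  startT : Option Qp
  turnL : Qm → Option Qp
  turnR : Qp → Option Qm
  injP : ∀ a q q' r, nextP a q = some r → nextP a q' = some r → q = q'
  injM : ∀ a q q' r, nextM a q = some r → nextM a q' = some r → q = q'
  injL : ∀ q q' r, turnL q = some r → turnL q' = some r → q = q'
  injR : ∀ q q' r, turnR q = some r → turnR q' = some r → q = q'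
  startT_ne_turnL : ∀ q r, startT = some r → turnL q ≠ some r

/-- One step of a sweeping automaton on input `⊢w⊣`: a configuration is a state
together with a head position in `{0, 1, …, |w| + 1}`, where position `0` is the
left end-marker, position `i` with `1 ≤ i ≤ |w|` carries the `i`-th input
symbol, and position `|w| + 1` is the right end-marker.  The result is `none`
when the corresponding transition is undefined and the computation halts. -/
noncomputable def SRFA.step {A Qp Qm : Type} (M : SRFA A Qp Qm) (w : List A) :
    (Qp ⊕ Qm) × ℕ → Option ((Qp ⊕ Qm) × ℕ)
  | (Sum.inl q, i) =>
      if i = 0 then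
        if q = M.start then M.startT.map (fun p => (Sum.inl p, 1)) else none
      else if i = w.length + 1 then
        (M.turnR q).map (fun r => (Sum.inr r, w.length))
      else
        (w[i - 1]?.bind (fun a => M.nextP a q)).map (fun p => (Sum.inl p, i + 1))
  | (Sum.inr q, i) =>
      if i = 0 then (M.turnL q).map (fun p => (Sum.inl p, 1))
      else if i = w.length + 1 then none
      else (w[i - 1]?.bind (fun a => M.nextM a q)).map (fun r => (Sum.inr r, i - 1))

/-- The configuration reached after `n` steps of the computation on `w`,
starting in the initial state at the left end-marker (or `none` if the
computation has halted before). -/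
noncomputable def SRFA.steps {A Qp Qm : Type} (M : SRFA A Qp Qm) (w : List A) :
    ℕ → Option ((Qp ⊕ Qm) × ℕ)
  | 0 => some (Sum.inl M.start, 0)
  | n + 1 => (M.steps w n).bind (M.step w)

/-- Acceptance of an ordinary sRFA: the computation halts at the right
end-marker in an accepting state `q ∈ F ⊆ Q₊`. -/
def SRFA.AcceptsR {A Qp Qm : Type} (M : SRFA A Qp Qm) (F : Set Qp) (w : List A) : Prop :=
  ∃ n q, M.steps w n = some (Sum.inl q, w.length + 1) ∧ q ∈ F ∧
    M.step w (Sum.inl q, w.length + 1) = none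

def SRFA.LangR {A Qp Qm : Type} (M : SRFA A Qp Qm) (F : Set Qp) : Set (List A) :=
  {w | M.AcceptsR F w}

/-- Acceptance of an sRFA with acceptance at both sides: the computation halts
at either end-marker in an accepting state `c ∈ F ⊆ Q₊ ∪ Q₋`. -/
def SRFA.AcceptsB {A Qp Qm : Type} (M : SRFA A Qp Qm) (F : Set (Qp ⊕ Qm)) (w : List A) : Prop :=
  ∃ n c i, M.steps w n = some (c, i) ∧ c ∈ F ∧ (i = 0 ∨ i = w.length + 1) ∧
    M.step w (c, i) = none

def SRFA.LangB {A Qp Qm : Type} (M : SRFA A Qp Qm) (F : Set (Qp ⊕ Qm)) : Set (List A) :=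
  {w | M.AcceptsB F w}

def RecSRFA (A : Type) (L : Set (List A)) : Prop :=
  ∃ (Qp Qm : Type) (_ : Fintype Qp) (_ : Fintype Qm) (M : SRFA A Qp Qm) (F : Set Qp),
    M.LangR F = L

open Function

/-- A run over a one-letter alphabet is an iteration of the (strict) transition function. -/
theorem runP_unit {Q : Type} (d : Unit → Q → Option Q) (q : Q) (w : List Unit) :
    runP d q w = (fun o : Option Q => o.bind (d ()))^[w.length] (some q) := by
  unfold runP
  generalize some q = o
  induction w generalizing o with
  | nil => rfl
  | cons a w ih => exact ih _

theorem iterate_bind_none {Q : Type} (f : Q → Option Q) (n : ℕ) :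
    (fun o : Option Q => o.bind f)^[n] none = none :=
  iterate_fixed rfl n

theorem iterate_bind_cancel {Q : Type} {f : Q → Option Q}
    (hf : ∀ q q' r, f q = some r → f q' = some r → q = q') (n : ℕ) {x y : Option Q} {r : Q}
    (hx : (fun o : Option Q => o.bind f)^[n] x = some r)
    (hy : (fun o : Option Q => o.bind f)^[n] y = some r) : x = y := by
  induction n generalizing r with
  | zero => exact hx.trans hy.symm
  | succ n ih =>
    rw [iterate_succ_apply'] at hx hy
    obtain ⟨p, hp, hpr⟩ := Option.bind_eq_some_iff.1 hx
    obtain ⟨p', hp', hpr'⟩ := Option.bind_eq_some_iff.1 hy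
    obtain rfl := hf _ _ _ hpr hpr'
    exact ih hp hp'

/-- For a partial injection of a finite set, a point whose orbit is long enough is periodic. -/
theorem isPeriodicPt_factorial_card {Q : Type} [Fintype Q] {f : Q → Option Q}
    (hf : ∀ q q' r, f q = some r → f q' = some r → q = q') {q r : Q} {n : ℕ}
    (hn : Fintype.card Q ≤ n) (hr : (fun o : Option Q => o.bind f)^[n] (some q) = some r) :
    IsPeriodicPt (fun o : Option Q => o.bind f) (Fintype.card Q).factorial (some q) := by
  have defined : ∀ i : Fin (Fintype.card Q + 1),
      ∃ p, (fun o : Option Q => o.bind f)^[(i : ℕ)] (some q) = some p := by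
    intro i
    rw [← Option.ne_none_iff_exists']
    intro hi
    rw [show n = (n - i) + i by omega, iterate_add_apply, hi, iterate_bind_none] at hr
    exact Option.some_ne_none r hr.symm
  choose p hp using defined
  obtain ⟨i, j, hij, hpij⟩ := Fintype.exists_ne_map_eq_of_card_lt p (by simp)
  wlog hlt : i < j generalizing i j
  · exact this j i hij.symm hpij.symm (lt_of_le_of_ne (not_lt.1 hlt) hij.symm)
  have hlt' : (i : ℕ) < j := hlt
  have hper : IsPeriodicPt (fun o : Option Q => o.bind f) (j - i) (some q) := by
    refine iterate_bind_cancel hf i (r := p j) ?_ (hpij ▸ hp i)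
    rw [← iterate_add_apply, show (i : ℕ) + (j - i) = j by omega]
    exact hp j
  exact hper.trans_dvd (Nat.dvd_factorial (by omega) (by omega))

/-- A unary language whose membership depends only on the length modulo `m` is recognized by
the cyclic permutation automaton with `m` states. -/
theorem rec1PerFA_of_mod {m : ℕ} (hm : 0 < m) (S : Set ℕ)
    (hS : ∀ n, n ∈ S ↔ n % m ∈ S) : Rec1PerFA Unit {w | w.length ∈ S} := by
  have : NeZero m := ⟨hm.ne'⟩
  refine ⟨ZMod m, inferInstance,
    { start := 0
      next := fun _ x => some (x + 1)
      inj := fun _ q q' r h h' => add_right_cancel (Option.some.inj (h.trans h'.symm))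
      accept := {x | x.val ∈ S} },
    ⟨fun _ _ => rfl, fun _ r => ⟨r - 1, by simp⟩⟩, ?_⟩
  have run : ∀ n : ℕ, (fun o : Option (ZMod m) => o.bind fun x => some (x + 1))^[n] (some 0)
      = some (n : ZMod m) := by
    intro n
    induction n with
    | zero => simp
    | succ n ih => rw [iterate_succ_apply', ih]; simp
  ext w
  simp only [RFA.Language, Set.mem_ofPred_eq, runP_unit, run, Option.some.injEq,
    exists_eq_right', ZMod.val_natCast]
  exact (hS _).symm

/-- every unary language recognized by an MRFA is the union of a
language recognized by a 1PerFA and a finite language. -/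
theorem stmt14 (L : Set (List Unit)) (h : RecMRFA Unit L) :
    ∃ P Lf : Set (List Unit), Rec1PerFA Unit P ∧ Lf.Finite ∧ L = P ∪ Lf := by
  obtain ⟨Q, _, M, rfl⟩ := h
  let g : Option Q → Option Q := fun o => o.bind (M.next ())
  let m := (Fintype.card Q).factorial
  let S : Set ℕ := {n | ∃ q ∈ M.init, IsPeriodicPt g m (some q) ∧
    ∃ r ∈ M.accept, g^[n] (some q) = some r}
  refine ⟨{w | w.length ∈ S}, {w ∈ M.Language | w.length < Fintype.card Q},
    rec1PerFA_of_mod (m := m) (Nat.factorial_pos _) S fun n => ?_,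
    (List.finite_length_lt Unit _).subset fun w hw => hw.2, ?_⟩
  · refine exists_congr fun q => and_congr_right fun _ => and_congr_right fun hq => ?_
    rw [hq.iterate_mod_apply n]
  · ext w
    constructor
    · intro hw
      by_cases hlen : w.length < Fintype.card Q
      · exact Or.inr ⟨hw, hlen⟩
      · obtain ⟨q, hq, r, hr, hrun⟩ := hw
        rw [runP_unit] at hrun
        exact Or.inl ⟨q, hq, isPeriodicPt_factorial_card (M.inj ()) (not_lt.1 hlen) hrun,
          r, hr, hrun⟩
    · rintro (⟨q, hq, -, r, hr, hrun⟩ | hw)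
      · exact ⟨q, hq, r, hr, (runP_unit _ _ _).trans hrun⟩
      · exact hw.1
end

section
/- For each k ≥ 2, over the alphabet {a, b} the language L_k = ⋃_{i=0}^{k−1} (a bⁱ)* b aⁱ is recognized by some sweeping reversible automaton (sRFA), but is not recognized by any one-way reversible automaton with multiple initial states (MRFA) having fewer than k initial states. -/
open scoped Classical

/-- The string `a bⁱ`, with `a = false` and `b = true`. -/
def abWord (i : ℕ) : List Bool := false :: List.replicate i true

/-- The language `L_k = ⋃_{i=0}^{k-1} (a bⁱ)* b aⁱ`. -/
def LstarTail (k : ℕ) : Set (List Bool) :=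
  {w | ∃ i < k, ∃ n : ℕ,
    w = (List.replicate n (abWord i)).flatten ++ true :: List.replicate i false}

theorem runP_append {A Q : Type} (d : A → Q → Option Q) (q : Q) (u v : List A) :
    runP d q (u ++ v) = (runP d q u).bind (fun r => runP d r v) := by
  have hnone : ∀ v : List A, v.foldl (fun o a => o.bind (d a)) none = none := by
    intro v
    induction v with
    | nil => rfl
    | cons a v ih => simpa using ih
  unfold runP
  rw [List.foldl_append]
  cases u.foldl (fun o a => o.bind (d a)) (some q) with
  | none => simp [hnone]
  | some r => rfl

theorem runP_reverse_cons {A Q : Type} (d : A → Q → Option Q) (q : Q) (a : A) (w : List A) :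
    runP d q (a :: w).reverse = (runP d q w.reverse).bind (d a) := by
  rw [List.reverse_cons, runP_append]
  rfl

theorem runP_injective {A Q : Type} {d : A → Q → Option Q}
    (hd : ∀ a q q' r, d a q = some r → d a q' = some r → q = q') (w : List A) :
    ∀ q q' r, runP d q w = some r → runP d q' w = some r → q = q' := by
  induction w using List.reverseRecOn with
  | nil =>
    intro q q' r h h'
    simp only [runP, List.foldl_nil, Option.some.injEq] at h h'
    rw [h, h']
  | append_singleton w a ih =>
    intro q q' r h h'
    rw [runP_append, Option.bind_eq_some_iff] at h h'
    obtain ⟨s, hs, h⟩ := h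
    obtain ⟨s', hs', h'⟩ := h'
    have hss : s = s' := hd a s s' r h h'
    subst hss
    exact ih q q' s hs hs'

/-! ### Sweeping automata for reversals of one-way reversible languages -/

/-- The sweeping automaton that scans its input from left to right without looking at it, simulates
a one-way reversible automaton on the way back, and carries accepting states to the right end. -/
noncomputable def RFA.reverseSweep {A Q : Type} (M : RFA A Q) : SRFA A (Option Q) Q where
  start := none
  nextP _ q := some q
  nextM := M.next
  startT := some none
  turnL q := if q ∈ M.accept then some (some q) else none
  turnR q := if q = none then some M.start else none
  injP := by
    intro a q q' r h h'
    exact Option.some.inj (h.trans h'.symm)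
  injM := M.inj
  injL := by
    intro q q' r h h'
    split_ifs at h h'
    exact Option.some.inj (Option.some.inj (h.trans h'.symm))
  injR := by
    intro q q' r h h'
    split_ifs at h h' with h₁ h₂
    rw [h₁, h₂]
  startT_ne_turnL := by
    intro q r h h'
    split_ifs at h'
    rw [← Option.some.inj h] at h'
    simp at h'

/-- The configurations that can occur in a computation of `RFA.reverseSweep`. -/
def RFA.SweepInvariant {A Q : Type} (M : RFA A Q) (w : List A) : (Option Q ⊕ Q) × ℕ → Prop
  | (Sum.inl none, _) => True
  | (Sum.inl (some q), i) => i ≠ 0 ∧ q ∈ M.accept ∧ runP M.next M.start w.reverse = some q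
  | (Sum.inr q, i) => i ≤ w.length ∧ runP M.next M.start (w.drop i).reverse = some q

theorem RFA.SweepInvariant.step {A Q : Type} {M : RFA A Q} {w : List A}
    {c c' : (Option Q ⊕ Q) × ℕ} (hc : M.SweepInvariant w c)
    (h : M.reverseSweep.step w c = some c') : M.SweepInvariant w c' := by
  match c with
  | (Sum.inl none, i) =>
    simp only [SRFA.step, RFA.reverseSweep] at h
    split_ifs at h
    · simp only [Option.map_some, Option.some.injEq] at h
      subst h
      trivial
    · simp only [Option.map_some, Option.some.injEq] at h
      subst h
      simp [RFA.SweepInvariant, runP]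
    · simp only [Option.map_eq_some_iff, Option.bind_eq_some_iff, Option.some.injEq] at h
      obtain ⟨p, ⟨a, -, rfl⟩, rfl⟩ := h
      trivial
  | (Sum.inl (some q), i) =>
    obtain ⟨hi, hq⟩ := hc
    simp only [SRFA.step, RFA.reverseSweep, hi, if_false, reduceCtorEq] at h
    split_ifs at h
    · simp at h
    · simp only [Option.map_eq_some_iff, Option.bind_eq_some_iff, Option.some.injEq] at h
      obtain ⟨p, ⟨a, -, rfl⟩, rfl⟩ := h
      exact ⟨i.succ_ne_zero, hq⟩
  | (Sum.inr q, i) =>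
    obtain ⟨hi, hq⟩ := hc
    simp only [SRFA.step, RFA.reverseSweep] at h
    split_ifs at h with h₀ hacc
    · simp only [Option.map_some, Option.some.injEq] at h
      subst h₀ h
      exact ⟨one_ne_zero, hacc, by simpa using hq⟩
    · simp at h
    · simp only [Option.map_eq_some_iff, Option.bind_eq_some_iff] at h
      obtain ⟨p, ⟨a, ha, hp⟩, rfl⟩ := h
      obtain ⟨i, rfl⟩ := Nat.exists_eq_succ_of_ne_zero h₀
      rw [Nat.succ_sub_one] at ha ⊢
      obtain ⟨hlt, rfl⟩ := List.getElem?_eq_some_iff.mp ha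
      refine ⟨hlt.le, ?_⟩
      rw [List.drop_eq_getElem_cons hlt, runP_reverse_cons, hq]
      exact hp

theorem RFA.sweepInvariant_steps {A Q : Type} (M : RFA A Q) (w : List A) (n : ℕ)
    {c : (Option Q ⊕ Q) × ℕ} (h : M.reverseSweep.steps w n = some c) : M.SweepInvariant w c := by
  induction n generalizing c with
  | zero =>
    simp only [SRFA.steps, Option.some.injEq] at h
    subst h
    trivial
  | succ n ih =>
    rw [SRFA.steps, Option.bind_eq_some_iff] at h
    obtain ⟨c₀, h₀, h⟩ := h
    exact (ih h₀).step h

/-- A configuration occurs in the computation on `w`. -/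
def SRFA.Reaches {A Qp Qm : Type} (M : SRFA A Qp Qm) (w : List A) (c : (Qp ⊕ Qm) × ℕ) : Prop :=
  ∃ n, M.steps w n = some c

theorem SRFA.Reaches.step {A Qp Qm : Type} {M : SRFA A Qp Qm} {w : List A}
    {c c' : (Qp ⊕ Qm) × ℕ} (hc : M.Reaches w c) (h : M.step w c = some c') : M.Reaches w c' := by
  obtain ⟨n, hn⟩ := hc
  exact ⟨n + 1, by rw [SRFA.steps, hn]; exact h⟩

theorem RFA.reaches_right {A Q : Type} (M : RFA A Q) (w : List A) (p : Option Q)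
    (h : M.reverseSweep.Reaches w (Sum.inl p, 1)) (i : ℕ) (hi : i ≤ w.length) :
    M.reverseSweep.Reaches w (Sum.inl p, i + 1) := by
  induction i with
  | zero => exact h
  | succ i ih =>
    refine (ih (by omega)).step ?_
    have hlt : i < w.length := hi
    simp [SRFA.step, RFA.reverseSweep, hlt, hlt.ne]

theorem RFA.reaches_left {A Q : Type} (M : RFA A Q) (w : List A) (i : ℕ) (hi : i ≤ w.length) :
    ∀ q, runP M.next M.start (w.drop i).reverse = some q →
      M.reverseSweep.Reaches w (Sum.inr q, i) := by
  induction hi using Nat.decreasingInduction with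
  | self =>
    intro q hq
    have hstart : M.start = q := by simpa [runP] using hq
    subst hstart
    have h₀ : M.reverseSweep.Reaches w (Sum.inl none, 0) := ⟨0, rfl⟩
    have h₁ : M.reverseSweep.Reaches w (Sum.inl none, 1) :=
      h₀.step (by simp [SRFA.step, RFA.reverseSweep])
    exact (M.reaches_right w none h₁ w.length le_rfl).step
      (by simp [SRFA.step, RFA.reverseSweep])
  | of_succ i hlt ih =>
    intro q hq
    have hlt : i < w.length := hlt
    rw [List.drop_eq_getElem_cons hlt, runP_reverse_cons, Option.bind_eq_some_iff] at hq
    obtain ⟨p, hp, hq⟩ := hq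
    refine (ih p hp).step ?_
    simp [SRFA.step, RFA.reverseSweep, hlt, hlt.ne, hq]

theorem RFA.langR_reverseSweep {A Q : Type} (M : RFA A Q) :
    M.reverseSweep.LangR {q | q ≠ none} = {w | w.reverse ∈ M.Language} := by
  ext w
  constructor
  · rintro ⟨n, q, hn, hq, -⟩
    obtain ⟨q, rfl⟩ := Option.ne_none_iff_exists'.mp hq
    obtain ⟨-, hacc, hrun⟩ := M.sweepInvariant_steps w n hn
    exact ⟨q, hacc, hrun⟩
  · rintro ⟨q, hacc, hrun⟩
    have h₀ := M.reaches_left w 0 (Nat.zero_le _) q (by simpa using hrun)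
    have h₁ : M.reverseSweep.Reaches w (Sum.inl (some q), 1) :=
      h₀.step (by simp [SRFA.step, RFA.reverseSweep, hacc])
    obtain ⟨n, hn⟩ := M.reaches_right w (some q) h₁ w.length le_rfl
    exact ⟨n, some q, hn, by simp, by simp [SRFA.step, RFA.reverseSweep]⟩

theorem Rec1RFA.recSRFA_reverse {A : Type} {L : Set (List A)} (h : Rec1RFA A L) :
    RecSRFA A {w | w.reverse ∈ L} := by
  obtain ⟨Q, _, M, rfl⟩ := h
  exact ⟨Option Q, Q, inferInstance, inferInstance, M.reverseSweep, _, M.langR_reverseSweep⟩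

/-! ### A one-way reversible automaton for the reversal of `LstarTail k` -/

/-- Transitions of `tailRFA`: the state `(j, none)` has counted `j` symbols `a`, and the state
`(j, some m)` has read `m` symbols `b` of the current block `bʲ a`. -/
def tailNext (k : ℕ) : Bool → Fin k × Option (Fin k) → Option (Fin k × Option (Fin k))
  | false, (j, none) => if h : j.1 + 1 < k then some (⟨j.1 + 1, h⟩, none) else none
  | true, (j, none) => some (j, some ⟨0, j.pos⟩)
  | false, (j, some m) => if m = j then some (j, some ⟨0, j.pos⟩) else none
  | true, (j, some m) =>
      if h : m.1 < j.1 then some (j, some ⟨m.1 + 1, by omega⟩) else none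

theorem tailNext_injective (k : ℕ) (a : Bool) (q q' r : Fin k × Option (Fin k))
    (h : tailNext k a q = some r) (h' : tailNext k a q' = some r) : q = q' := by
  obtain ⟨j, _ | m⟩ := q <;> obtain ⟨j', _ | m'⟩ := q' <;> cases a <;>
    simp only [tailNext] at h h' <;> grind

/-- A one-way reversible automaton for `⋃ aⁱ b (bⁱ a)*`. -/
def tailRFA (k : ℕ) (hk : 0 < k) : RFA Bool (Fin k × Option (Fin k)) where
  start := (⟨0, hk⟩, none)
  next := tailNext k
  inj := tailNext_injective k
  accept := {q | ∃ j, q = (j, some ⟨0, hk⟩)}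

/-- The words that lead `tailRFA` to a given state, read from right to left. -/
def TailInvariant {k : ℕ} (w : List Bool) : Fin k × Option (Fin k) → Prop
  | (j, none) => w = List.replicate j false
  | (j, some m) => ∃ n, w = List.replicate m true ++
      ((List.replicate n (abWord j)).flatten ++ true :: List.replicate j false)

theorem tailInvariant_of_run {k : ℕ} (hk : 0 < k) (w : List Bool) :
    ∀ q, runP (tailNext k) (⟨0, hk⟩, none) w.reverse = some q → TailInvariant w q := by
  induction w with
  | nil =>
    intro q h
    simp only [runP, List.reverse_nil, List.foldl_nil, Option.some.injEq] at h
    subst h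
    rfl
  | cons a w ih =>
    intro q h
    rw [runP_reverse_cons, Option.bind_eq_some_iff] at h
    obtain ⟨p, hp, h⟩ := h
    have hinv := ih p hp
    obtain ⟨j, _ | m⟩ := p <;> cases a <;> simp only [tailNext] at h
    · simp only [TailInvariant] at hinv
      split_ifs at h
      simp only [Option.some.injEq] at h
      subst h
      simp [TailInvariant, hinv, List.replicate_succ]
    · simp only [TailInvariant] at hinv
      simp only [Option.some.injEq] at h
      subst h
      exact ⟨0, by simp [hinv]⟩
    · obtain ⟨n, rfl⟩ := hinv
      split_ifs at h with hm
      simp only [Option.some.injEq] at h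
      subst h hm
      exact ⟨n + 1, by simp [abWord, List.replicate_succ]⟩
    · obtain ⟨n, rfl⟩ := hinv
      split_ifs at h
      simp only [Option.some.injEq] at h
      subst h
      exact ⟨n, by simp [List.replicate_succ]⟩

theorem run_replicate_false {k : ℕ} (hk : 0 < k) (j : ℕ) (hj : j < k) :
    runP (tailNext k) (⟨0, hk⟩, none) (List.replicate j false).reverse = some (⟨j, hj⟩, none) := by
  induction j with
  | zero => rfl
  | succ j ih =>
    rw [List.replicate_succ, runP_reverse_cons, ih (by omega)]
    simp [tailNext, hj]

theorem run_replicate_true {k : ℕ} (hk : 0 < k) (j : Fin k) (w : List Bool)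
    (hw : runP (tailNext k) (⟨0, hk⟩, none) w.reverse = some (j, some ⟨0, hk⟩))
    (m : ℕ) (hm : m ≤ j.1) :
    runP (tailNext k) (⟨0, hk⟩, none) (List.replicate m true ++ w).reverse =
      some (j, some ⟨m, by omega⟩) := by
  induction m with
  | zero => simpa using hw
  | succ m ih =>
    have hlt : m < j.1 := hm
    rw [List.replicate_succ, List.cons_append, runP_reverse_cons, ih hlt.le]
    simp [tailNext, hlt]

theorem run_flatten {k : ℕ} (hk : 0 < k) (j : Fin k) (n : ℕ) :
    runP (tailNext k) (⟨0, hk⟩, none)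
      ((List.replicate n (abWord j)).flatten ++ true :: List.replicate j false).reverse =
      some (j, some ⟨0, hk⟩) := by
  induction n with
  | zero =>
    rw [List.replicate_zero, List.flatten_nil, List.nil_append, runP_reverse_cons,
      run_replicate_false hk j j.2]
    rfl
  | succ n ih =>
    rw [List.replicate_succ, List.flatten_cons, List.append_assoc, abWord, List.cons_append,
      runP_reverse_cons]
    have h := run_replicate_true hk j _ ih j le_rfl
    rw [abWord] at h
    rw [h]
    simp [tailNext]

theorem reverse_mem_language_tailRFA {k : ℕ} (hk : 0 < k) (w : List Bool) :
    w.reverse ∈ (tailRFA k hk).Language ↔ w ∈ LstarTail k := by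
  constructor
  · rintro ⟨q, ⟨j, rfl⟩, h⟩
    obtain ⟨n, hn⟩ := tailInvariant_of_run hk w _ h
    exact ⟨j, j.2, n, by simpa using hn⟩
  · rintro ⟨i, hi, n, rfl⟩
    exact ⟨_, ⟨⟨i, hi⟩, rfl⟩, run_flatten hk ⟨i, hi⟩ n⟩

theorem recSRFA_lstarTail {k : ℕ} (hk : 0 < k) : RecSRFA Bool (LstarTail k) := by
  have h : Rec1RFA Bool (tailRFA k hk).Language := ⟨_, inferInstance, _, rfl⟩
  convert h.recSRFA_reverse using 1
  ext w
  exact (reverse_mem_language_tailRFA hk w).symm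

/-! ### Lower bound on the number of initial states -/

theorem replicate_append_cons_inj {A : Type} {a b : A} (hab : a ≠ b) {i j : ℕ} {u v : List A}
    (h : List.replicate i a ++ b :: u = List.replicate j a ++ b :: v) : i = j ∧ u = v := by
  induction i generalizing j with
  | zero => cases j <;> simp_all [List.replicate_succ, eq_comm]
  | succ i ih =>
    cases j with
    | zero => simp_all [List.replicate_succ]
    | succ j =>
      simp only [List.replicate_succ, List.cons_append, List.cons.injEq, true_and] at h
      obtain ⟨rfl, rfl⟩ := ih h
      exact ⟨rfl, rfl⟩

theorem eq_of_mem_lstarTail {k i j N : ℕ} (hN : N ≠ 0)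
    (h : (List.replicate N (abWord i)).flatten ++ true :: List.replicate j false ∈ LstarTail k) :
    i = j := by
  obtain ⟨m, -, n, h⟩ := h
  have hrev := congrArg List.reverse h
  simp only [List.reverse_append, List.reverse_cons, List.reverse_replicate, List.append_assoc,
    List.singleton_append] at hrev
  obtain ⟨rfl, hflat⟩ := replicate_append_cons_inj (by decide) hrev
  have hflat := List.reverse_injective hflat
  have hcount := congrArg (List.count false) hflat
  have hlen := congrArg List.length hflat
  have hfalse : ∀ i, List.count false (abWord i) = 1 := by
    intro i
    simp [abWord, List.count_replicate]
  simp only [List.count_flatten, List.map_replicate, hfalse, List.sum_replicate, smul_eq_mul,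
    mul_one] at hcount
  subst hcount
  simp only [List.length_flatten, List.map_replicate, List.sum_replicate, smul_eq_mul] at hlen
  simpa [abWord] using Nat.eq_of_mul_eq_mul_left (Nat.pos_of_ne_zero hN) hlen

theorem runP_replicate_flatten_add {A Q : Type} (d : A → Q → Option Q) (q : Q) (u : List A)
    (m n : ℕ) : runP d q (List.replicate (m + n) u).flatten =
      (runP d q (List.replicate m u).flatten).bind
        (fun r => runP d r (List.replicate n u).flatten) := by
  rw [List.replicate_add, List.flatten_append, runP_append]

/-- If a reversible automaton can read `u` as many times as it has states, then some repetition of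
`u` leads back to the initial state. -/
theorem exists_run_eq_self {A Q : Type} [Fintype Q] {d : A → Q → Option Q}
    (hd : ∀ a q q' r, d a q = some r → d a q' = some r → q = q') (u : List A) (q : Q)
    (h : runP d q (List.replicate (Fintype.card Q) u).flatten ≠ none) :
    ∃ n, 0 < n ∧ n ≤ Fintype.card Q ∧ runP d q (List.replicate n u).flatten = some q := by
  have hdef : ∀ i : Fin (Fintype.card Q + 1),
      ∃ r, runP d q (List.replicate i u).flatten = some r := by
    intro i
    obtain ⟨s, hs⟩ := Option.ne_none_iff_exists'.mp h
    rw [← Nat.add_sub_of_le (Nat.lt_succ_iff.mp i.2), runP_replicate_flatten_add,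
      Option.bind_eq_some_iff] at hs
    obtain ⟨r, hr, -⟩ := hs
    exact ⟨r, hr⟩
  choose f hf using hdef
  obtain ⟨i, j, hij, hfij⟩ : ∃ i j, i < j ∧ f i = f j := by
    obtain ⟨i, j, hne, he⟩ := Fintype.exists_ne_map_eq_of_card_lt f (by simp)
    rcases lt_or_gt_of_ne hne with hlt | hlt
    · exact ⟨i, j, hlt, he⟩
    · exact ⟨j, i, hlt, he.symm⟩
  have hlt : i.1 < j.1 := hij
  have hj := hf j
  rw [← Nat.sub_add_cancel hlt.le, runP_replicate_flatten_add, Option.bind_eq_some_iff] at hj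
  obtain ⟨r, hr, hrun⟩ := hj
  have hrq : r = q := runP_injective hd _ _ _ _ hrun (hfij ▸ hf i)
  subst hrq
  exact ⟨j - i, by omega, by omega, hr⟩

theorem run_mul_eq_self {A Q : Type} {d : A → Q → Option Q} {u : List A} {q : Q} {n : ℕ}
    (h : runP d q (List.replicate n u).flatten = some q) (m : ℕ) :
    runP d q (List.replicate (m * n) u).flatten = some q := by
  induction m with
  | zero => simp [runP]
  | succ m ih =>
    rw [Nat.succ_mul, runP_replicate_flatten_add, ih]
    exact h

theorem run_factorial_eq_self {A Q : Type} [Fintype Q] {d : A → Q → Option Q}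
    (hd : ∀ a q q' r, d a q = some r → d a q' = some r → q = q') (u : List A) (q : Q)
    (h : runP d q (List.replicate (Fintype.card Q).factorial u).flatten ≠ none) :
    runP d q (List.replicate (Fintype.card Q).factorial u).flatten = some q := by
  have hcard : runP d q (List.replicate (Fintype.card Q) u).flatten ≠ none := by
    intro hnone
    rw [← Nat.add_sub_of_le (Nat.self_le_factorial (Fintype.card Q)),
      runP_replicate_flatten_add, hnone] at h
    exact h rfl
  obtain ⟨n, hpos, hle, hn⟩ := exists_run_eq_self hd u q hcard
  obtain ⟨m, hm⟩ := Nat.dvd_factorial hpos hle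
  rw [hm, mul_comm]
  exact run_mul_eq_self hn m

theorem MRFA.le_ncard_init_of_language_eq {k : ℕ} {Q : Type} [Fintype Q] (M : MRFA Bool Q)
    (hM : M.Language = LstarTail k) : k ≤ M.init.ncard := by
  have hstate : ∀ i : Fin k, ∃ q ∈ M.init,
      runP M.next q (List.replicate (Fintype.card Q).factorial (abWord i)).flatten = some q ∧
      ∃ qf ∈ M.accept, runP M.next q (true :: List.replicate i false) = some qf := by
    intro i
    have hmem : (List.replicate (Fintype.card Q).factorial (abWord i)).flatten ++
        true :: List.replicate i false ∈ M.Language := by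
      rw [hM]
      exact ⟨i, i.2, _, rfl⟩
    obtain ⟨q, hq, qf, hqf, hrun⟩ := hmem
    rw [runP_append, Option.bind_eq_some_iff] at hrun
    obtain ⟨r, hr, hrun⟩ := hrun
    have hcycle := run_factorial_eq_self M.inj (abWord i) q (by simp [hr])
    have hrq : r = q := Option.some.inj (hr.symm.trans hcycle)
    subst hrq
    exact ⟨r, hq, hcycle, qf, hqf, hrun⟩
  choose f hinit hcycle hacc using hstate
  have hf : Function.Injective f := by
    intro i j hij
    obtain ⟨qf, hqf, hrun⟩ := hacc j
    have hmem : (List.replicate (Fintype.card Q).factorial (abWord i)).flatten ++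
        true :: List.replicate j false ∈ M.Language := by
      refine ⟨f i, hinit i, qf, hqf, ?_⟩
      rw [runP_append, hcycle i, hij]
      exact hrun
    rw [hM] at hmem
    exact Fin.ext (eq_of_mem_lstarTail (Nat.factorial_ne_zero _) hmem)
  calc k = (Set.range f).ncard := by
        rw [← Set.image_univ, Set.ncard_image_of_injective _ hf, Set.ncard_univ, Nat.card_fin]
    _ ≤ M.init.ncard := Set.ncard_le_ncard (Set.range_subset_iff.mpr hinit) M.init.toFinite

/-- for `k ≥ 2`, the language `⋃_{i=0}^{k-1} (a bⁱ)* b aⁱ` is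
recognized by some sRFA, but by no MRFA with fewer than `k` initial states. -/
theorem stmt17 (k : ℕ) (hk : 2 ≤ k) :
    RecSRFA Bool (LstarTail k) ∧
    ∀ (Q : Type) [Fintype Q] (M : MRFA Bool Q),
      M.init.ncard < k → M.Language ≠ LstarTail k := by
  exact ⟨recSRFA_lstarTail (by omega),
    fun Q _ M hlt hM => absurd (M.le_ncard_init_of_language_eq hM) (by omega)⟩
end

section
/- Let L be a language recognized by some sweeping reversible automaton (sRFA), and suppose there are strings x, z ∈ Σ* and a nonempty string y ∈ Σ⁺ such that x yⁿ z ∈ L for every n ≥ 1. Then xz ∈ L. -/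
open scoped Classical

/-- A partial injection of a finite type extends to a permutation. -/
theorem exists_perm_extending {Q : Type} [Finite Q] (f : Q → Option Q)
    (hf : ∀ q q' r, f q = some r → f q' = some r → q = q') :
    ∃ e : Equiv.Perm Q, ∀ q r, f q = some r → e q = r := by
  have := Fintype.ofFinite Q
  obtain ⟨g, hg⟩ := Finset.exists_equiv_extend_of_card_eq (α := Q) (β := Q)
    (t := Finset.univ) (by simp) (s := Finset.univ.filter fun q => (f q).isSome)
    (f := fun q => (f q).getD q) (Finset.subset_univ _) (by
      intro q hq q' hq' h
      simp only [Finset.coe_filter, Finset.mem_univ, true_and, Set.mem_ofPred_eq,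
        Option.isSome_iff_exists] at hq hq'
      obtain ⟨r, hr⟩ := hq
      obtain ⟨r', hr'⟩ := hq'
      simp only [hr, hr', Option.getD_some] at h
      exact hf q q' r hr (h ▸ hr'))
  refine ⟨g.trans (Equiv.subtypeUnivEquiv (by simp)), fun q r h => ?_⟩
  simpa [h] using hg q (by simp [h])

/-- The permutation induced by a word, letters acting from left to right. -/
def wordPerm {A Q : Type} (g : A → Equiv.Perm Q) (v : List A) : Equiv.Perm Q :=
  (v.reverse.map g).prod

theorem wordPerm_take_succ {A Q : Type} (g : A → Equiv.Perm Q) {u : List A} {j : ℕ} {a : A}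
    (h : u[j]? = some a) : wordPerm g (u.take (j + 1)) = g a * wordPerm g (u.take j) := by
  simp [wordPerm, List.take_add_one, h]

theorem wordPerm_flatten_replicate {A Q : Type} (g : A → Equiv.Perm Q) (y : List A) (n : ℕ) :
    wordPerm g (List.replicate n y).flatten = wordPerm g y ^ n := by
  induction n with
  | zero => simp [wordPerm]
  | succ n ih =>
    rw [List.replicate_succ, List.flatten_cons, pow_succ, ← ih]
    simp [wordPerm]

namespace SRFA

variable {A Qp Qm : Type}

/-- The configuration on `⊢xz⊣` that corresponds to a configuration on `⊢xuz⊣`, where the letters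
of `u` act through `g` on rightward sweeps and through the inverses of `h` on leftward sweeps:
while the head is inside `u`, the short computation waits between `x` and `z`. -/
def contract (g : A → Equiv.Perm Qp) (h : A → Equiv.Perm Qm) (x u : List A) :
    (Qp ⊕ Qm) × ℕ → (Qp ⊕ Qm) × ℕ
  | (Sum.inl q, i) => (Sum.inl ((wordPerm g (u.take (i - (x.length + 1))))⁻¹ q),
      i - min u.length (i - (x.length + 1)))
  | (Sum.inr q, i) => (Sum.inr ((wordPerm h (u.take (i - x.length)))⁻¹ q),
      i - min u.length (i - x.length))

variable (M : SRFA A Qp Qm) {g : A → Equiv.Perm Qp} {h : A → Equiv.Perm Qm} {x u z : List A}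

theorem contract_inl_of_le {q : Qp} {i : ℕ} (hi : i ≤ x.length + 1) :
    contract g h x u (Sum.inl q, i) = (Sum.inl q, i) := by
  simp [contract, Nat.sub_eq_zero_of_le hi, wordPerm]

theorem contract_inr_of_le {q : Qm} {i : ℕ} (hi : i ≤ x.length) :
    contract g h x u (Sum.inr q, i) = (Sum.inr q, i) := by
  simp [contract, Nat.sub_eq_zero_of_le hi, wordPerm]

theorem contract_inl_of_ge (hu : wordPerm g u = 1) {q : Qp} {i : ℕ}
    (hi : x.length + u.length + 1 ≤ i) :
    contract g h x u (Sum.inl q, i) = (Sum.inl q, i - u.length) := by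
  simp [contract, List.take_of_length_le (show u.length ≤ i - (x.length + 1) by omega), hu,
    show u.length ≤ i - (x.length + 1) by omega]

theorem contract_inr_of_ge (hu : wordPerm h u = 1) {q : Qm} {i : ℕ}
    (hi : x.length + u.length ≤ i) :
    contract g h x u (Sum.inr q, i) = (Sum.inr q, i - u.length) := by
  simp [contract, List.take_of_length_le (show u.length ≤ i - x.length by omega), hu,
    show u.length ≤ i - x.length by omega]

theorem step_contract (hg : ∀ a q r, M.nextP a q = some r → g a q = r)
    (hh : ∀ a q r, M.nextM a q = some r → (h a)⁻¹ q = r)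
    (hgu : wordPerm g u = 1) (hhu : wordPerm h u = 1) {c c' : (Qp ⊕ Qm) × ℕ}
    (hc : M.step (x ++ u ++ z) c = some c') :
    contract g h x u c' = contract g h x u c ∨
      M.step (x ++ z) (contract g h x u c) = some (contract g h x u c') := by
  obtain ⟨q | q, i⟩ := c
  · rcases Nat.eq_zero_or_pos i with rfl | hi
    · right
      rw [contract_inl_of_le (by omega)]
      simp only [step, if_true] at hc ⊢
      split_ifs at hc ⊢ with hq
      obtain ⟨p, hp, rfl⟩ := Option.map_eq_some_iff.1 hc
      rw [contract_inl_of_le (by omega), hp]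
      rfl
    · by_cases hend : i = (x ++ u ++ z).length + 1
      · right
        subst hend
        simp only [step, Nat.succ_ne_zero, if_false, if_true] at hc
        obtain ⟨r, hr, rfl⟩ := Option.map_eq_some_iff.1 hc
        rw [contract_inl_of_ge hgu (by simp), contract_inr_of_ge hhu (by simp)]
        have e : (x ++ u ++ z).length + 1 - u.length = (x ++ z).length + 1 := by simp; omega
        have e' : (x ++ u ++ z).length - u.length = (x ++ z).length := by simp; omega
        rw [e, e']
        simp [step, hr]
      · simp only [step, hi.ne', hend, if_false] at hc
        obtain ⟨p, hb, rfl⟩ := Option.map_eq_some_iff.1 hc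
        obtain ⟨a, ha, hp⟩ := Option.bind_eq_some_iff.1 hb
        obtain ⟨j, rfl⟩ : ∃ j, i = j + 1 := ⟨i - 1, by omega⟩
        rw [Nat.add_sub_cancel] at ha
        have hlt : j < (x ++ u ++ z).length := (List.getElem?_eq_some_iff.1 ha).1
        simp only [List.length_append] at hlt
        by_cases h1 : j < x.length
        · right
          rw [contract_inl_of_le (by omega), contract_inl_of_le (by omega)]
          have ha' : (x ++ z)[j]? = some a := by
            rw [List.append_assoc, List.getElem?_append_left h1] at ha
            rw [List.getElem?_append_left h1, ha]
          have : j ≠ (x ++ z).length := by simp; omega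
          simp [step, ha', hp, -List.length_append, this]
        · by_cases h2 : j < x.length + u.length
          · left
            have ha' : u[j - x.length]? = some a := by
              rw [List.getElem?_append_left (by simp; omega),
                List.getElem?_append_right (by omega)] at ha
              exact ha
            have e : j + 1 + 1 - (x.length + 1) = (j - x.length) + 1 := by omega
            have e' : j + 1 - (x.length + 1) = j - x.length := by omega
            simp only [contract, e, e', wordPerm_take_succ g ha', ← hg a q p hp]
            simp only [mul_inv_rev, Equiv.Perm.mul_apply, Equiv.Perm.inv_def, Equiv.symm_apply_apply]
            congr 1
            omega
          · right
            rw [contract_inl_of_ge hgu (by omega), contract_inl_of_ge hgu (by omega)]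
            obtain ⟨k, rfl⟩ : ∃ k, j = k + u.length := ⟨j - u.length, by omega⟩
            have ha' : (x ++ z)[k]? = some a := by
              rw [List.getElem?_append_right (by simp; omega)] at ha
              rw [List.getElem?_append_right (by omega), ← ha]
              congr 1
              simp; omega
            have e : k + u.length + 1 - u.length = k + 1 := by omega
            have e' : k + u.length + 1 + 1 - u.length = k + 1 + 1 := by omega
            have : k ≠ (x ++ z).length := by simp; omega
            simp [step, ha', hp, -List.length_append, this, e, e']
  · rcases Nat.eq_zero_or_pos i with rfl | hi
    · right
      rw [contract_inr_of_le (by omega)]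
      simp only [step, if_true] at hc ⊢
      obtain ⟨p, hp, rfl⟩ := Option.map_eq_some_iff.1 hc
      rw [contract_inl_of_le (by omega), hp]
      rfl
    · by_cases hend : i = (x ++ u ++ z).length + 1
      · simp only [step, hend, if_false, if_true, Nat.succ_ne_zero] at hc
        cases hc
      · simp only [step, hi.ne', hend, if_false] at hc
        obtain ⟨p, hb, rfl⟩ := Option.map_eq_some_iff.1 hc
        obtain ⟨a, ha, hp⟩ := Option.bind_eq_some_iff.1 hb
        obtain ⟨j, rfl⟩ : ∃ j, i = j + 1 := ⟨i - 1, by omega⟩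
        rw [Nat.add_sub_cancel] at ha ⊢
        have hlt : j < (x ++ u ++ z).length := (List.getElem?_eq_some_iff.1 ha).1
        simp only [List.length_append] at hlt
        by_cases h1 : j < x.length
        · right
          rw [contract_inr_of_le (by omega), contract_inr_of_le (by omega)]
          have ha' : (x ++ z)[j]? = some a := by
            rw [List.append_assoc, List.getElem?_append_left h1] at ha
            rw [List.getElem?_append_left h1, ha]
          have : j ≠ (x ++ z).length := by simp; omega
          simp [step, ha', hp, -List.length_append, this]
        · by_cases h2 : j < x.length + u.length
          · left
            have ha' : u[j - x.length]? = some a := by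
              rw [List.getElem?_append_left (by simp; omega),
                List.getElem?_append_right (by omega)] at ha
              exact ha
            have e : j + 1 - x.length = (j - x.length) + 1 := by omega
            simp only [contract, e, wordPerm_take_succ h ha', ← hh a q p hp]
            simp only [mul_inv_rev, Equiv.Perm.mul_apply]
            congr 1
            omega
          · right
            rw [contract_inr_of_ge hhu (by omega), contract_inr_of_ge hhu (by omega)]
            obtain ⟨k, rfl⟩ : ∃ k, j = k + u.length := ⟨j - u.length, by omega⟩
            have ha' : (x ++ z)[k]? = some a := by
              rw [List.getElem?_append_right (by simp; omega)] at ha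
              rw [List.getElem?_append_right (by omega), ← ha]
              congr 1
              simp; omega
            have e : k + u.length + 1 - u.length = k + 1 := by omega
            have : k ≠ (x ++ z).length := by simp; omega
            simp [step, ha', hp, -List.length_append, this, e]

theorem exists_steps_contract (hg : ∀ a q r, M.nextP a q = some r → g a q = r)
    (hh : ∀ a q r, M.nextM a q = some r → (h a)⁻¹ q = r)
    (hgu : wordPerm g u = 1) (hhu : wordPerm h u = 1) (n : ℕ) {c : (Qp ⊕ Qm) × ℕ}
    (hc : M.steps (x ++ u ++ z) n = some c) :
    ∃ m, M.steps (x ++ z) m = some (contract g h x u c) := by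
  induction n generalizing c with
  | zero =>
    obtain rfl : (Sum.inl M.start, 0) = c := Option.some.inj hc
    exact ⟨0, by rw [contract_inl_of_le (by omega), steps]⟩
  | succ n ih =>
    obtain ⟨d, hd, hdc⟩ := Option.bind_eq_some_iff.1 hc
    obtain ⟨m, hm⟩ := ih hd
    rcases M.step_contract hg hh hgu hhu hdc with e | e
    · exact ⟨m, e ▸ hm⟩
    · exact ⟨m + 1, by rw [steps, hm]; exact e⟩

/-- A factor that acts as the identity in both directions can be erased from an accepted word. -/
theorem AcceptsR.erase_factor {F : Set Qp} (hg : ∀ a q r, M.nextP a q = some r → g a q = r)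
    (hh : ∀ a q r, M.nextM a q = some r → (h a)⁻¹ q = r)
    (hgu : wordPerm g u = 1) (hhu : wordPerm h u = 1) (hw : M.AcceptsR F (x ++ u ++ z)) :
    M.AcceptsR F (x ++ z) := by
  obtain ⟨n, q, hn, hq, hhalt⟩ := hw
  obtain ⟨m, hm⟩ := M.exists_steps_contract hg hh hgu hhu n hn
  rw [contract_inl_of_ge hgu (by simp)] at hm
  refine ⟨m, q, ?_, hq, ?_⟩
  · rw [hm]
    congr 2
    simp; omega
  · simpa [step] using hhalt

end SRFA

/-- if an sRFA accepts `x yⁿ z` for every `n ≥ 1`, where `y` is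
nonempty, then it accepts `xz`. -/
theorem stmt19 (A Qp Qm : Type) [Fintype Qp] [Fintype Qm]
    (M : SRFA A Qp Qm) (F : Set Qp) (x y z : List A) (hy : y ≠ [])
    (h : ∀ n : ℕ, 1 ≤ n → x ++ (List.replicate n y).flatten ++ z ∈ M.LangR F) :
    x ++ z ∈ M.LangR F := by
  choose g hg using fun a => exists_perm_extending (M.nextP a) (M.injP a)
  choose k hk using fun a => exists_perm_extending (M.nextM a) (M.injM a)
  let k' : A → Equiv.Perm Qm := fun a => (k a)⁻¹
  have hpos : 1 ≤ orderOf (wordPerm g y) * orderOf (wordPerm k' y) :=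
    Nat.mul_pos (orderOf_pos _) (orderOf_pos _)
  refine SRFA.AcceptsR.erase_factor (h := k') M hg (by simpa [k'] using hk) ?_ ?_ (h _ hpos)
  · rw [wordPerm_flatten_replicate, pow_mul, pow_orderOf_eq_one, one_pow]
  · rw [wordPerm_flatten_replicate, mul_comm, pow_mul, pow_orderOf_eq_one, one_pow]
end
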